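/- Let 1 ≤ q ≤ n−1 and let A be a complex n×q matrix that is totally non-singular. Then there exists a totally non-singular complex n×(n−q) matrix B such that A*B = 0, where A* denotes the conjugate transpose. -/

import Mathlib

open Matrix

noncomputable section

/-- A matrix is totally non-singular if every minor (the determinant of every square
submatrix) is nonzero. -/
def TotallyNonSingular {K : Type*} [CommRing K] {a b : ℕ} (A : Matrix (Fin a) (Fin b) K) :
    Prop :=
  ∀ (s : ℕ) (f : Fin s → Fin a) (g : Fin s → Fin b),
    StrictMono f → StrictMono g → (A.submatrix f g).det ≠ 0

/-!
Write `L = Aᴴ`, and let `t` be any `q` of the `n` column indices. The maximal minor of `L` on `t` is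
nonzero, so by Cramer's rule the rows outside `t` of a solution of `L * B = 0` can be prescribed
freely, up to a nonzero factor. The rows of any given minor of `B` avoid some such `t`, because
`B` has at most `n - q` columns; hence each minor is nonzero at some solution. Over an infinite
domain, finitely many minors are then simultaneously nonzero at a generic solution.
-/

section GenericMinors

variable {R ι : Type*} [CommRing R] [IsDomain R] [Infinite R]
  {κ : ι → Type*} [∀ i, Fintype (κ i)] [∀ i, DecidableEq (κ i)]

theorem exists_forall_polynomial_eval_ne_zero {s : Finset ι} {p : ι → Polynomial R}
    (hp : ∀ i ∈ s, p i ≠ 0) : ∃ x, ∀ i ∈ s, (p i).eval x ≠ 0 := by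
  have hprod : ∏ i ∈ s, p i ≠ 0 := Finset.prod_ne_zero_iff.mpr hp
  obtain ⟨x, hx⟩ := Polynomial.exists_eval_ne_zero_of_natDegree_lt_card _ hprod
    (Cardinal.natCast_lt_aleph0.trans_le (Cardinal.aleph0_le_mk R))
  rw [Polynomial.eval_prod, Finset.prod_ne_zero_iff] at hx
  exact ⟨x, hx⟩

theorem exists_forall_det_smul_add_ne_zero {s : Finset ι} {A B : ∀ i, Matrix (κ i) (κ i) R}
    (h : ∀ i ∈ s, (A i).det ≠ 0 ∨ (B i).det ≠ 0) :
    ∃ x : R, ∀ i ∈ s, (x • A i + B i).det ≠ 0 := by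
  let p (i : ι) : Polynomial R :=
    det ((Polynomial.X : Polynomial R) • (A i).map Polynomial.C + (B i).map Polynomial.C)
  have hp : ∀ i ∈ s, p i ≠ 0 := by
    intro i hi hzero
    have hA : (A i).det = 0 := by
      rw [← Polynomial.coeff_det_X_add_C_card (A i) (B i)]
      exact congrArg (Polynomial.coeff · _) hzero
    have hB : (B i).det = 0 := by
      rw [← Polynomial.coeff_det_X_add_C_zero (A i) (B i)]
      exact congrArg (Polynomial.coeff · _) hzero
    exact (h i hi).elim (· hA) (· hB)
  have eval_p (x : R) (i : ι) : (p i).eval x = (x • A i + B i).det := by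
    rw [← Polynomial.coe_evalRingHom, RingHom.map_det]
    congr 1
    ext j k
    simp [mul_comm x]
  obtain ⟨x, hx⟩ := exists_forall_polynomial_eval_ne_zero hp
  exact ⟨x, fun i hi => eval_p x i ▸ hx i hi⟩

theorem exists_mem_forall_det_submatrix_ne_zero [Finite ι] {m n : Type*}
    (W : Submodule R (Matrix m n R)) (f : ∀ i, κ i → m) (g : ∀ i, κ i → n)
    (h : ∀ i, ∃ C ∈ W, (C.submatrix (f i) (g i)).det ≠ 0) :
    ∃ B ∈ W, ∀ i, (B.submatrix (f i) (g i)).det ≠ 0 := by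
  classical
  have := Fintype.ofFinite ι
  suffices ∀ s : Finset ι, ∃ B ∈ W, ∀ i ∈ s, (B.submatrix (f i) (g i)).det ≠ 0 by
    simpa using this Finset.univ
  intro s
  induction s using Finset.induction_on with
  | empty => exact ⟨0, W.zero_mem, by simp⟩
  | insert a s _ ih =>
    obtain ⟨B, hBW, hB⟩ := ih
    obtain ⟨C, hCW, hC⟩ := h a
    obtain ⟨x, hx⟩ := exists_forall_det_smul_add_ne_zero (s := insert a s)
      (A := fun i => C.submatrix (f i) (g i)) (B := fun i => B.submatrix (f i) (g i))
      (Finset.forall_mem_insert .. |>.mpr ⟨.inl hC, fun i hi => .inr (hB i hi)⟩)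
    exact ⟨x • C + B, W.add_mem (W.smul_mem x hCW) hBW, hx⟩

end GenericMinors

section PrescribedRows

variable {R κ m n q : Type*} [CommRing R] [Fintype n] [Fintype q] [DecidableEq q]

/- Cramer's rule: the rows indexed by `t` are solved for in terms of the rows indexed by `f`, all
other rows being zero. -/
theorem exists_mul_eq_zero_and_submatrix_eq_det_smul (L : Matrix q n R) {t : q → n} {f : κ → n}
    (hf : f.Injective) (htf : ∀ i j, f i ≠ t j) (E : Matrix κ m R) :
    ∃ C : Matrix n m R, L * C = 0 ∧ C.submatrix f id = (L.submatrix id t).det • E := by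
  classical
  have := Fintype.ofInjective f hf
  let M := L.submatrix id t
  let N := L.submatrix id f
  let P : Matrix n q R := (1 : Matrix n n R).submatrix id t
  let Q : Matrix n κ R := (1 : Matrix n n R).submatrix id f
  have hLP : L * P = M := congrArg (submatrix · id t) L.mul_one
  have hLQ : L * Q = N := congrArg (submatrix · id f) L.mul_one
  have hPf : P.submatrix f id = 0 := by
    ext i j
    exact one_apply_ne (htf i j)
  have hQf : Q.submatrix f id = 1 := submatrix_one f hf
  refine ⟨Q * (M.det • E) - P * (M.adjugate * (N * E)), ?_, ?_⟩
  · calc L * (Q * (M.det • E) - P * (M.adjugate * (N * E)))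
        = N * (M.det • E) - M * M.adjugate * (N * E) := by
          simp only [Matrix.mul_sub, ← Matrix.mul_assoc, hLP, hLQ]
      _ = 0 := by simp [mul_adjugate]
  · calc (Q * (M.det • E) - P * (M.adjugate * (N * E))).submatrix f id
        = Q.submatrix f id * (M.det • E) - P.submatrix f id * (M.adjugate * (N * E)) := rfl
      _ = M.det • E := by simp [hPf, hQf]

theorem exists_mul_eq_zero_and_det_submatrix_ne_zero [IsDomain R] [Fintype κ] [DecidableEq κ]
    (L : Matrix q n R) {t : q → n} {f : κ → n} {g : κ → m} (hL : (L.submatrix id t).det ≠ 0)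
    (hf : f.Injective) (hg : g.Injective) (htf : ∀ i j, f i ≠ t j) :
    ∃ C : Matrix n m R, L * C = 0 ∧ (C.submatrix f g).det ≠ 0 := by
  classical
  obtain ⟨C, hLC, hC⟩ := exists_mul_eq_zero_and_submatrix_eq_det_smul L hf htf
    ((1 : Matrix m m R).submatrix g id)
  have hCfg : C.submatrix f g = (L.submatrix id t).det • 1 := by
    calc C.submatrix f g
        = (C.submatrix f id).submatrix id g := rfl
      _ = (L.submatrix id t).det • (1 : Matrix m m R).submatrix g g := by rw [hC]; rfl
      _ = (L.submatrix id t).det • 1 := by rw [submatrix_one g hg]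
  refine ⟨C, hLC, ?_⟩
  rw [hCfg, det_smul, det_one, mul_one]
  exact pow_ne_zero _ hL

end PrescribedRows

theorem exists_strictMono_forall_ne {κ α : Type*} [Fintype κ] [Fintype α] [LinearOrder α] {q : ℕ}
    (f : κ → α) (h : Fintype.card κ + q ≤ Fintype.card α) :
    ∃ t : Fin q → α, StrictMono t ∧ ∀ i j, f i ≠ t j := by
  have hcard : q ≤ (Finset.univ.image f)ᶜ.card := by
    have : (Finset.univ.image f).card ≤ Fintype.card κ := Finset.card_image_le
    rw [Finset.card_compl]
    lia
  obtain ⟨T, hT, hTq⟩ := Finset.exists_subset_card_eq hcard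
  refine ⟨T.orderEmbOfFin hTq, (T.orderEmbOfFin hTq).strictMono, fun i j hij => ?_⟩
  have hj : T.orderEmbOfFin hTq j ∉ Finset.univ.image f :=
    Finset.mem_compl.mp (hT (T.orderEmbOfFin_mem hTq j))
  exact hj (hij ▸ Finset.mem_image_of_mem f (Finset.mem_univ i))

theorem exists_mem_totallyNonSingular {R : Type*} [CommRing R] [IsDomain R] [Infinite R]
    {a b : ℕ} (W : Submodule R (Matrix (Fin a) (Fin b) R))
    (h : ∀ (s : ℕ) (f : Fin s → Fin a) (g : Fin s → Fin b), StrictMono f → StrictMono g →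
      ∃ C ∈ W, (C.submatrix f g).det ≠ 0) :
    ∃ B ∈ W, TotallyNonSingular B := by
  let Minor := Σ s : Fin (a + 1), (Fin s ↪o Fin a) × (Fin s ↪o Fin b)
  obtain ⟨B, hBW, hB⟩ := exists_mem_forall_det_submatrix_ne_zero W
    (fun i : Minor => i.2.1) (fun i => i.2.2)
    fun i => h i.1 i.2.1 i.2.2 i.2.1.strictMono i.2.2.strictMono
  refine ⟨B, hBW, fun s f g hf hg => ?_⟩
  have hs : s ≤ a := by simpa using Fintype.card_le_of_injective f hf.injective
  exact hB ⟨⟨s, by lia⟩, .ofStrictMono f hf, .ofStrictMono g hg⟩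

theorem stmt7_general {R : Type*} [CommRing R] [IsDomain R] [Infinite R] {m n q : ℕ}
    (hmq : m + q ≤ n) (L : Matrix (Fin q) (Fin n) R)
    (hL : ∀ t : Fin q → Fin n, StrictMono t → (L.submatrix id t).det ≠ 0) :
    ∃ B : Matrix (Fin n) (Fin m) R, TotallyNonSingular B ∧ L * B = 0 := by
  obtain ⟨B, hLB, hB⟩ := exists_mem_totallyNonSingular
    (LinearMap.ker (mulLeftLinearMap (Fin m) R L)) fun s f g hf hg => by
      have hs : s ≤ m := by simpa using Fintype.card_le_of_injective g hg.injective
      obtain ⟨t, ht, htf⟩ := exists_strictMono_forall_ne f (q := q) (by simp; lia)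
      exact exists_mul_eq_zero_and_det_submatrix_ne_zero L (hL t ht) hf.injective hg.injective htf
  exact ⟨B, hB, hLB⟩

/-- for `1 ≤ q ≤ n−1` and a totally non-singular complex `n×q` matrix `A`,
there is a totally non-singular complex `n×(n−q)` matrix `B` with `A*B = 0`. -/
theorem stmt7 {n q : ℕ} (hq1 : 1 ≤ q) (hqn : q ≤ n - 1)
    (A : Matrix (Fin n) (Fin q) ℂ) (hA : TotallyNonSingular A) :
    ∃ B : Matrix (Fin n) (Fin (n - q)) ℂ, TotallyNonSingular B ∧ Aᴴ * B = 0 :=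
  stmt7_general (by lia) Aᴴ fun t ht => by
    simpa [← conjTranspose_submatrix, det_conjTranspose] using hA q t id ht strictMono_id
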